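/- Let W, W̲, W̄ be k×m real matrices with W̲_{ij} ≤ W_{ij} ≤ W̄_{ij} for all entries, let b, b̲, b̄ ∈ ℝ^k with b̲_i ≤ b_i ≤ b̄_i for all i, and let z, z̲, z̄ ∈ ℝ^m with z̲_j ≤ z_j ≤ z̄_j for all j. Define l, u ∈ ℝ^k by l_i = b̲_i + Σ_j min{W̲_{ij}·z̲_j, W̲_{ij}·z̄_j, W̄_{ij}·z̲_j, W̄_{ij}·z̄_j} and u_i = b̄_i + Σ_j max{W̲_{ij}·z̲_j, W̲_{ij}·z̄_j, W̄_{ij}·z̲_j, W̄_{ij}·z̄_j}. Then for every i, max(l_i, 0) ≤ max((W z + b)_i, 0) ≤ max(u_i, 0); that is, the ReLU output of the actual layer lies componentwise inside the interval [ReLU(l), ReLU(u)] computed by the interval neural network. -/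

import Mathlib

/-!
Multiplication by a fixed scalar is monotone or antitone according to the sign of the scalar, so it
is extremal at the endpoints of an interval. Moving first the weight and then the activation to an
endpoint, a product `w * x` lies between the least and the greatest of the four corner products.
These bounds add up, and a monotone activation function preserves them.
-/

open Set

section CornerProducts

variable {R : Type*} [LinearOrder R]

/-- The lower endpoint of the interval-arithmetic product of the intervals between `a` and `b` and
between `c` and `d`. -/
def cornerMin [Mul R] (a b c d : R) : R :=
  min (min (a * c) (a * d)) (min (b * c) (b * d))

/-- The upper endpoint of the interval-arithmetic product of the intervals between `a` and `b` and
between `c` and `d`. -/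
def cornerMax [Mul R] (a b c d : R) : R :=
  max (max (a * c) (a * d)) (max (b * c) (b * d))

variable [Ring R] [IsOrderedRing R] {a b c d w x : R}

theorem mul_left_mem_uIcc (w : R) (hx : x ∈ uIcc c d) : w * x ∈ uIcc (w * c) (w * d) := by
  rcases le_total 0 w with hw | hw
  · exact ((monotone_mul_left_of_nonneg hw).monotoneOn _).mapsTo_uIcc hx
  · exact ((antitone_mul_left hw).antitoneOn _).mapsTo_uIcc hx

theorem mul_right_mem_uIcc (x : R) (hw : w ∈ uIcc a b) : w * x ∈ uIcc (a * x) (b * x) := by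
  rcases le_total 0 x with hx | hx
  · exact ((monotone_mul_right_of_nonneg hx).monotoneOn _).mapsTo_uIcc hw
  · exact ((antitone_mul_right hx).antitoneOn _).mapsTo_uIcc hw

theorem mul_mem_Icc_cornerMin_cornerMax (hw : w ∈ uIcc a b) (hx : x ∈ uIcc c d) :
    w * x ∈ Icc (cornerMin a b c d) (cornerMax a b c d) := by
  obtain ⟨ha_lower, ha_upper⟩ := mul_left_mem_uIcc a hx
  obtain ⟨hb_lower, hb_upper⟩ := mul_left_mem_uIcc b hx
  obtain ⟨hw_lower, hw_upper⟩ := mul_right_mem_uIcc x hw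
  exact ⟨(min_le_min ha_lower hb_lower).trans hw_lower,
    hw_upper.trans (max_le_max ha_upper hb_upper)⟩

end CornerProducts

section AffineMaps

variable {ι κ R : Type*} [Fintype κ] [LinearOrder R]

/-- The lower endpoints of the interval-arithmetic evaluation of the affine map `W *ᵥ z + b`, where
`W` ranges entrywise between `Wl` and `Wu`, `z` between `zl` and `zu`, and `b` is at least `bl`. -/
def affineLower [NonUnitalNonAssocSemiring R] (Wl Wu : Matrix ι κ R) (bl : ι → R)
    (zl zu : κ → R) (i : ι) : R :=
  bl i + ∑ j, cornerMin (Wl i j) (Wu i j) (zl j) (zu j)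

/-- The upper endpoints of the interval-arithmetic evaluation of the affine map `W *ᵥ z + b`, where
`W` ranges entrywise between `Wl` and `Wu`, `z` between `zl` and `zu`, and `b` is at most `bu`. -/
def affineUpper [NonUnitalNonAssocSemiring R] (Wl Wu : Matrix ι κ R) (bu : ι → R)
    (zl zu : κ → R) (i : ι) : R :=
  bu i + ∑ j, cornerMax (Wl i j) (Wu i j) (zl j) (zu j)

variable [Ring R] [IsOrderedRing R]

theorem dotProduct_mem_Icc_sum_corner {w wl wu z zl zu : κ → R}
    (hw : ∀ j, w j ∈ uIcc (wl j) (wu j)) (hz : ∀ j, z j ∈ uIcc (zl j) (zu j)) :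
    w ⬝ᵥ z ∈ Icc (∑ j, cornerMin (wl j) (wu j) (zl j) (zu j))
      (∑ j, cornerMax (wl j) (wu j) (zl j) (zu j)) :=
  have hwz j := mul_mem_Icc_cornerMin_cornerMax (hw j) (hz j)
  ⟨Finset.sum_le_sum fun j _ ↦ (hwz j).1, Finset.sum_le_sum fun j _ ↦ (hwz j).2⟩

theorem mulVec_add_mem_Icc_affine {W Wl Wu : Matrix ι κ R} {b bl bu : ι → R} {z zl zu : κ → R}
    (hW : ∀ i j, W i j ∈ uIcc (Wl i j) (Wu i j)) (hb : ∀ i, b i ∈ Icc (bl i) (bu i))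
    (hz : ∀ j, z j ∈ uIcc (zl j) (zu j)) (i : ι) :
    W.mulVec z i + b i ∈ Icc (affineLower Wl Wu bl zl zu i) (affineUpper Wl Wu bu zl zu i) := by
  obtain ⟨hWz_lower, hWz_upper⟩ := dotProduct_mem_Icc_sum_corner (hW i) hz
  rw [add_comm]
  exact ⟨add_le_add (hb i).1 hWz_lower, add_le_add (hb i).2 hWz_upper⟩

theorem stmt7_general {S : Type*} [Preorder S] {σ : R → S} (hσ : Monotone σ)
    {W Wl Wu : Matrix ι κ R} {b bl bu : ι → R} {z zl zu : κ → R}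
    (hW : ∀ i j, W i j ∈ uIcc (Wl i j) (Wu i j)) (hb : ∀ i, b i ∈ Icc (bl i) (bu i))
    (hz : ∀ j, z j ∈ uIcc (zl j) (zu j)) (i : ι) :
    σ (W.mulVec z i + b i) ∈
      Icc (σ (affineLower Wl Wu bl zl zu i)) (σ (affineUpper Wl Wu bu zl zu i)) :=
  hσ.mapsTo_Icc (mulVec_add_mem_Icc_affine hW hb hz i)

end AffineMaps

/-- Soundness of one ReLU layer of an interval neural network: if the true weights,
biases, and activations lie componentwise within their intervals, then the true layer
output `ReLU(Wz + b)` lies componentwise within `[ReLU(l), ReLU(u)]`, where `l` and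
`u` are the interval-arithmetic lower and upper bounds. -/
theorem stmt7 {k m : ℕ}
    (W Wl Wu : Matrix (Fin k) (Fin m) ℝ)
    (hWl : ∀ i j, Wl i j ≤ W i j) (hWu : ∀ i j, W i j ≤ Wu i j)
    (b bl bu : Fin k → ℝ)
    (hbl : ∀ i, bl i ≤ b i) (hbu : ∀ i, b i ≤ bu i)
    (z zl zu : Fin m → ℝ)
    (hzl : ∀ j, zl j ≤ z j) (hzu : ∀ j, z j ≤ zu j)
    (l u : Fin k → ℝ)
    (hl : ∀ i, l i = bl i + ∑ j, min (min (Wl i j * zl j) (Wl i j * zu j))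
                                      (min (Wu i j * zl j) (Wu i j * zu j)))
    (hu : ∀ i, u i = bu i + ∑ j, max (max (Wl i j * zl j) (Wl i j * zu j))
                                      (max (Wu i j * zl j) (Wu i j * zu j))) :
    ∀ i, max (l i) 0 ≤ max (W.mulVec z i + b i) 0 ∧
         max (W.mulVec z i + b i) 0 ≤ max (u i) 0 := by
  obtain rfl : l = affineLower Wl Wu bl zl zu := funext hl
  obtain rfl : u = affineUpper Wl Wu bu zl zu := funext hu
  exact stmt7_general (σ := (max · 0)) (monotone_id.max monotone_const)
    (fun i j ↦ mem_uIcc_of_le (hWl i j) (hWu i j)) (fun i ↦ ⟨hbl i, hbu i⟩)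
    (fun j ↦ mem_uIcc_of_le (hzl j) (hzu j))
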